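/- arXiv:2201.00045 — 2 statements merged into one kernel-verified Lean document; each statement's English description precedes it below -/
import Mathlib

section
/- Let H be the half-twist operator on F^{({1,…,n}ⁿ)}, defined as the product over the standard reduced word of the longest permutation: H = (R̂₁)·(R̂₂R̂₁)·(R̂₃R̂₂R̂₁)⋯(R̂_{n−1}R̂_{n−2}⋯R̂₁), a product of n(n−1)/2 factors. Then H · w₊ = (−1)^{n(n−1)/2} · q^{−(n²−1)/2} · w₊, i.e. the q-antisymmetrizer vector is an eigenvector of the positive half-twist with eigenvalue t^{−n/2}, where t = (−1)^{n−1} q^{(n²−1)/n}. -/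
/-!
Statement 5: let H be the half-twist operator, the product over the standard
reduced word of the longest permutation:
H = (R̂₁)·(R̂₂R̂₁)·(R̂₃R̂₂R̂₁)⋯(R̂_{n−1}⋯R̂₁)  (n(n−1)/2 factors).
Then H·w₊ = (−1)^{n(n−1)/2} q^{−(n²−1)/2} w₊ = t^{−n/2} w₊.
Here F = ℚ(v), q = v^{2n}, so the eigenvalue is (−1)^{n(n−1)/2} v^{−n(n²−1)}.
-/

set_option synthInstance.maxHeartbeats 1000000
set_option maxHeartbeats 1000000

noncomputable section

abbrev F : Type := RatFunc ℚ

def vv : F := RatFunc.X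

/-- The braiding matrix `R̂`. -/
def Rhat (n : ℕ) : Matrix (Fin n × Fin n) (Fin n × Fin n) F := fun p r =>
  vv ^ (-2 : ℤ) *
    ((if p.1 = p.2 then vv ^ (2 * (n : ℤ)) else 1) *
        (if p.1 = r.2 then 1 else 0) * (if p.2 = r.1 then 1 else 0) +
      (vv ^ (2 * (n : ℤ)) - vv ^ (-(2 * (n : ℤ)))) *
        (if p.1 < p.2 then 1 else 0) * (if p.1 = r.1 then 1 else 0) *
        (if p.2 = r.2 then 1 else 0))

/-- `R̂_m` acting on the (1-based) m-th and (m+1)-st tensor factors of `(Fⁿ)^{⊗k}`. -/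
def RhatM (n k m : ℕ) : Matrix (Fin k → Fin n) (Fin k → Fin n) F := fun i j =>
  if h : m - 1 < k ∧ m < k then
    Rhat n (i ⟨m - 1, h.1⟩, i ⟨m, h.2⟩) (j ⟨m - 1, h.1⟩, j ⟨m, h.2⟩) *
      ∏ r : Fin k,
        (if r.val = m - 1 ∨ r.val = m then 1 else if i r = j r then (1 : F) else 0)
  else 0

/-- Inversion number of a tuple. -/
def ell (n : ℕ) (i : Fin n → Fin n) : ℕ :=
  (Finset.univ.filter fun p : Fin n × Fin n => p.1 < p.2 ∧ i p.2 < i p.1).card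

/-- `(−q)^{ℓ(i)}`, set to 0 when `i` is not a bijection of {1,…,n}. -/
def mqpow (n : ℕ) (i : Fin n → Fin n) : F :=
  if Function.Bijective i then (-(vv ^ (2 * (n : ℤ)))) ^ ell n i else 0

/-- The constant `a = q^{(1−n)(2n+1)/4} = v^{n(1−n)(2n+1)/2}`. -/
def aConst (n : ℕ) : F := vv ^ (((n : ℤ) * (1 - (n : ℤ)) * (2 * (n : ℤ) + 1)) / 2)

/-- The q-antisymmetrizer vector `w₊`, with coordinates `w₊(i) = a·(−q)^{ℓ(i)}`. -/
def wPlus (n : ℕ) : (Fin n → Fin n) → F := fun i => aConst n * mqpow n i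

/-- The positive half-twist
`H = (R̂₁)·(R̂₂R̂₁)·(R̂₃R̂₂R̂₁)⋯(R̂_{n−1}R̂_{n−2}⋯R̂₁)`. -/
def halfTwist (n : ℕ) : Matrix (Fin n → Fin n) (Fin n → Fin n) F :=
  (((List.range (n - 1)).map fun s =>
      (((List.range (s + 1)).reverse).map fun t => RhatM n n (t + 1)).prod)).prod

/-!
Each `R̂_m` already has `w₊` as an eigenvector: exchanging the `m`-th and `(m+1)`-st entries of a
bijection changes its inversion number by one, so as a function of these two entries `w₊` is
`q`-antisymmetric, and on `q`-antisymmetric tensors `R̂` acts by `-q^(-1/n - 1)`. The half-twist is a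
word of length `n(n-1)/2` in the `R̂_m`, so its eigenvalue is the corresponding power.
-/

section Inversions

variable {ι α : Type*} [LinearOrder ι]

theorem swap_lt_swap_iff_of_covBy {a b x y : ι} (hab : a ⋖ b) (hxy : (x, y) ≠ (a, b))
    (hyx : (x, y) ≠ (b, a)) : Equiv.swap a b x < Equiv.swap a b y ↔ x < y := by
  have lt_b (z : ι) : z < b ↔ z ≤ a := hab.lt_iff_le_left
  have a_lt (z : ι) : a < z ↔ b ≤ z := hab.lt_iff_le_right
  simp only [Equiv.swap_apply_def]
  grind

variable [Fintype ι] [Preorder α] [DecidableLT α]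

/-- The inversions of a finite sequence `f`: the pairs of positions whose values are
out of order. -/
def inversions (f : ι → α) : Finset (ι × ι) :=
  {p | p.1 < p.2 ∧ f p.2 < f p.1}

theorem inversions_comp_swap {f : ι → α} {a b : ι} (hab : a ⋖ b) (hf : f a < f b) :
    inversions (f ∘ Equiv.swap a b) = insert (a, b)
      ((inversions f).map ((Equiv.swap a b).prodCongr (Equiv.swap a b)).toEmbedding) := by
  ext ⟨x, y⟩
  simp only [inversions, Finset.mem_filter_univ, Finset.mem_insert, Finset.mem_map_equiv,
    Equiv.prodCongr_symm, Equiv.symm_swap, Equiv.prodCongr_apply, Prod.map, Function.comp_apply]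
  by_cases hxy : (x, y) = (a, b)
  · obtain ⟨rfl, rfl⟩ := Prod.mk.inj hxy
    simp [hab.lt, hf]
  by_cases hyx : (x, y) = (b, a)
  · obtain ⟨rfl, rfl⟩ := Prod.mk.inj hyx
    simp [hab.lt.asymm, hf.asymm, hab.ne']
  rw [swap_lt_swap_iff_of_covBy hab hxy hyx]
  simp only [hxy, false_or]

theorem card_inversions_comp_swap {f : ι → α} {a b : ι} (hab : a ⋖ b) (hf : f a < f b) :
    (inversions (f ∘ Equiv.swap a b)).card = (inversions f).card + 1 := by
  have hnotMem : (a, b) ∉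
      (inversions f).map ((Equiv.swap a b).prodCongr (Equiv.swap a b)).toEmbedding := by
    simp [inversions, Finset.mem_map_equiv, hab.lt.asymm]
  rw [inversions_comp_swap hab hf, Finset.card_insert_of_notMem hnotMem, Finset.card_map]

end Inversions

section PairAction

variable {ι α R : Type*} [DecidableEq ι] {a b : ι}

/-- The restriction of a tensor `w`, given by its coordinates, to the factors `a` and `b`, the
indices of the other factors being those of `i`. -/
def pairSlice (a b : ι) (i : ι → α) (w : (ι → α) → R) : α × α → R := fun p =>
  w (Function.update (Function.update i a p.1) b p.2)

theorem pairSlice_apply_self (i : ι → α) (w : (ι → α) → R) :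
    pairSlice a b i w (i a, i b) = w i := by
  simp only [pairSlice, Function.update_eq_self]

theorem update_update_comp_swap (hab : a ≠ b) (i : ι → α) (x y : α) :
    Function.update (Function.update i a x) b y ∘ Equiv.swap a b =
      Function.update (Function.update i a y) b x := by
  ext r
  simp only [Function.comp_apply, Function.update_apply, Equiv.swap_apply_def]
  grind

variable [Fintype ι] [Fintype α] [DecidableEq α] [NonUnitalNonAssocSemiring R]

/-- The operator on tensors that acts by `A` on the distinct factors `a` and `b` and by the identity
on the other ones. -/
def pairAction (A : Matrix (α × α) (α × α) R) (a b : ι) : Matrix (ι → α) (ι → α) R := fun i j =>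
  if ∀ r, r = a ∨ r = b ∨ i r = j r then A (i a, i b) (j a, j b) else 0

theorem pairAction_mulVec_apply (A : Matrix (α × α) (α × α) R) (hab : a ≠ b) (w : (ι → α) → R)
    (i : ι → α) :
    (pairAction A a b).mulVec w i = A.mulVec (pairSlice a b i w) (i a, i b) := by
  have update_eq (j : ι → α) (hj : ∀ r, r = a ∨ r = b ∨ i r = j r) :
      Function.update (Function.update i a (j a)) b (j b) = j := by
    ext r
    grind [Function.update_apply]
  simp only [Matrix.mulVec, dotProduct, pairAction, ite_mul, zero_mul]
  rw [← Finset.sum_filter]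
  refine Finset.sum_nbij' (fun j => (j a, j b))
    (fun p => Function.update (Function.update i a p.1) b p.2) (by simp) ?_ ?_ ?_ ?_
  · grind [Function.update_apply]
  · exact fun j hj => update_eq j (by simpa using hj)
  · simp [hab]
  · intro j hj
    rw [pairSlice, update_eq j (by simpa using hj)]

theorem pairAction_mulVec_of_pairSlice {A : Matrix (α × α) (α × α) R} (hab : a ≠ b)
    {w : (ι → α) → R} {c : R}
    (h : ∀ i, A.mulVec (pairSlice a b i w) = c • pairSlice a b i w) :
    (pairAction A a b).mulVec w = c • w := by
  ext i
  rw [pairAction_mulVec_apply A hab, h, Pi.smul_apply, Pi.smul_apply, pairSlice_apply_self]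

end PairAction

theorem list_prod_mulVec_of_forall_mem {ι R : Type*} [Fintype ι] [DecidableEq ι] [CommSemiring R]
    {L : List (Matrix ι ι R)} {w : ι → R} {c : R} (h : ∀ A ∈ L, A.mulVec w = c • w) :
    L.prod.mulVec w = c ^ L.length • w := by
  induction L with
  | nil => simp
  | cons A L ih =>
    rw [List.forall_mem_cons] at h
    rw [List.prod_cons, ← Matrix.mulVec_mulVec, ih h.2, Matrix.mulVec_smul, h.1, smul_smul,
      List.length_cons, pow_succ]

theorem vv_ne_zero : vv ≠ 0 := RatFunc.X_ne_zero

theorem Rhat_mulVec_apply (n : ℕ) (u : Fin n × Fin n → F) (x y : Fin n) :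
    (Rhat n).mulVec u (x, y) = vv ^ (-2 : ℤ) *
      ((if x = y then vv ^ (2 * (n : ℤ)) else 1) * u (y, x) +
        if x < y then (vv ^ (2 * (n : ℤ)) - vv ^ (-(2 * (n : ℤ)))) * u (x, y) else 0) := by
  simp [Matrix.mulVec, dotProduct, Rhat, mul_assoc, ← Finset.mul_sum, add_mul,
    Finset.sum_add_distrib, Fintype.sum_prod_type]

/-- A vector `u` in `Fⁿ ⊗ Fⁿ` is `q`-antisymmetric, for `q = v^(2n)`, if `u_{yx} = -q u_{xy}` for
`x < y` and its diagonal coordinates vanish. -/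
def IsQAntisymmetric {n : ℕ} (u : Fin n × Fin n → F) : Prop :=
  (∀ x, u (x, x) = 0) ∧ ∀ x y, x < y → u (y, x) = -vv ^ (2 * (n : ℤ)) * u (x, y)

theorem IsQAntisymmetric.Rhat_mulVec {n : ℕ} {u : Fin n × Fin n → F} (hu : IsQAntisymmetric u) :
    (Rhat n).mulVec u = (-vv ^ (-(2 * (n : ℤ) + 2))) • u := by
  obtain ⟨hdiag, hswap⟩ := hu
  have hq : vv ^ (2 * (n : ℤ)) ≠ 0 := zpow_ne_zero _ vv_ne_zero
  have hc : vv ^ (-(2 * (n : ℤ) + 2)) = vv ^ (-2 : ℤ) * (vv ^ (2 * (n : ℤ)))⁻¹ := by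
    rw [neg_add_rev, zpow_add₀ vv_ne_zero, zpow_neg vv (2 * (n : ℤ))]
  ext ⟨x, y⟩
  rw [Rhat_mulVec_apply, Pi.smul_apply, smul_eq_mul, hc, zpow_neg vv (2 * (n : ℤ))]
  rcases lt_trichotomy x y with hxy | rfl | hxy
  · rw [if_neg hxy.ne, if_pos hxy, hswap x y hxy]
    field
  · simp only [hdiag, mul_zero, ite_self, add_zero]
  · rw [if_neg hxy.ne', if_neg hxy.not_gt, hswap y x hxy]
    field

theorem wPlus_eq_zero_of_not_injective {n : ℕ} {i : Fin n → Fin n}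
    (hi : ¬ Function.Injective i) : wPlus n i = 0 := by
  rw [wPlus, mqpow, if_neg fun h => hi h.injective, mul_zero]

theorem wPlus_comp_swap {n : ℕ} {i : Fin n → Fin n} {a b : Fin n} (hab : a ⋖ b)
    (hi : i a < i b) :
    wPlus n (i ∘ Equiv.swap a b) = -vv ^ (2 * (n : ℤ)) * wPlus n i := by
  have hell : ell n (i ∘ Equiv.swap a b) = ell n i + 1 := card_inversions_comp_swap hab hi
  simp only [wPlus, mqpow, Function.Bijective.of_comp_iff i (Equiv.swap a b).bijective, hell]
  split_ifs <;> ring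

theorem isQAntisymmetric_pairSlice_wPlus {n : ℕ} {a b : Fin n} (hab : a ⋖ b)
    (i : Fin n → Fin n) : IsQAntisymmetric (pairSlice a b i (wPlus n)) := by
  refine ⟨fun x => wPlus_eq_zero_of_not_injective fun hinj => hab.ne (hinj ?_), fun x y hxy => ?_⟩
  · simp [hab.ne]
  · simp only [pairSlice]
    rw [← update_update_comp_swap hab.ne, wPlus_comp_swap hab]
    simpa [hab.ne] using hxy

theorem RhatM_succ_eq_pairAction {n k m : ℕ} (hm : m + 1 < k) :
    RhatM n k (m + 1) =
      pairAction (Rhat n) (⟨m, Nat.lt_of_succ_lt hm⟩ : Fin k) ⟨m + 1, hm⟩ := by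
  ext i j
  simp only [RhatM, pairAction, Nat.add_sub_cancel, hm, Nat.lt_of_succ_lt hm, and_self, dite_true,
    ← ite_or, Finset.prod_ite_zero, Finset.prod_const_one, mul_ite, mul_one, mul_zero, Fin.ext_iff,
    or_assoc, Finset.mem_univ, true_imp_iff]

theorem RhatM_succ_mulVec_wPlus {n m : ℕ} (hm : m + 1 < n) :
    (RhatM n n (m + 1)).mulVec (wPlus n) = (-vv ^ (-(2 * (n : ℤ) + 2))) • wPlus n := by
  have hcov : (⟨m, Nat.lt_of_succ_lt hm⟩ : Fin n) ⋖ ⟨m + 1, hm⟩ := by simp [Fin.covBy_iff]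
  rw [RhatM_succ_eq_pairAction hm]
  exact pairAction_mulVec_of_pairSlice hcov.ne fun i =>
    (isQAntisymmetric_pairSlice_wPlus hcov i).Rhat_mulVec

/-- The standard reduced word `0 · 10 · 210 ⋯` of the longest permutation of `n` elements. Its
letters are numbered from `0`: the letter `m` stands for `R̂_{m+1}`. -/
def longestWord (n : ℕ) : List ℕ :=
  (List.range (n - 1)).flatMap fun s => (List.range (s + 1)).reverse

theorem succ_lt_of_mem_longestWord {n m : ℕ} (hm : m ∈ longestWord n) : m + 1 < n := by
  simp only [longestWord, List.mem_flatMap, List.mem_reverse, List.mem_range] at hm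
  omega

theorem length_longestWord (n : ℕ) : (longestWord n).length = n * (n - 1) / 2 := by
  simp only [longestWord, List.length_flatMap, List.length_reverse, List.length_range]
  rw [← Finset.sum_range_id]
  cases n with
  | zero => rfl
  | succ n => rw [Finset.sum_range_succ', add_zero, Nat.add_sub_cancel]; rfl

theorem halfTwist_eq_prod_longestWord (n : ℕ) :
    halfTwist n = ((longestWord n).map fun m => RhatM n n (m + 1)).prod := by
  simp only [halfTwist, longestWord, List.flatMap_def, List.map_flatten, List.prod_flatten,
    List.map_map, Function.comp_def]

theorem halfTwist_wPlus (n : ℕ) (hn : 2 ≤ n) :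
    (halfTwist n).mulVec (wPlus n) =
      ((-1 : F) ^ (n * (n - 1) / 2) * vv ^ (-((n : ℤ) * ((n : ℤ) ^ 2 - 1)))) • wPlus n := by
  have heigen : ∀ A ∈ (longestWord n).map fun m => RhatM n n (m + 1),
      A.mulVec (wPlus n) = (-vv ^ (-(2 * (n : ℤ) + 2))) • wPlus n :=
    List.forall_mem_map.2 fun _ hm => RhatM_succ_mulVec_wPlus (succ_lt_of_mem_longestWord hm)
  have htwo : (2 : ℤ) * ((n * (n - 1) / 2 : ℕ) : ℤ) = n * (n - 1) := by
    rw [← Nat.cast_pred (by omega)]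
    exact_mod_cast Nat.mul_div_cancel' n.even_mul_pred_self.two_dvd
  have hexp : -(2 * (n : ℤ) + 2) * ((n * (n - 1) / 2 : ℕ) : ℤ) =
      -((n : ℤ) * ((n : ℤ) ^ 2 - 1)) := by
    linear_combination (-(n : ℤ) - 1) * htwo
  rw [halfTwist_eq_prod_longestWord, list_prod_mulVec_of_forall_mem heigen, List.length_map,
    length_longestWord, neg_pow, ← zpow_natCast (vv ^ _), ← zpow_mul, hexp]
end
end

section
/- The braiding matrix is invariant under 180-degree rotation combined with conjugation of all states: for all a, b, c, d ∈ {1,…,n}, R̂^{(a,b)}_{(c,d)} = R̂^{(d̄,c̄)}_{(b̄,ā)}, where m̄ = n+1−m. (Equivalently, the R-matrix formula is preserved under the involution i ↔ l̄, j ↔ k̄; this is the key computation showing the Reshetikhin–Turaev matrix of a crossing is unchanged under orientation reversal.) -/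
/-!
Statement 7: the braiding matrix is invariant under 180-degree rotation
combined with conjugation of all states: R̂^{(a,b)}_{(c,d)} = R̂^{(d̄,c̄)}_{(b̄,ā)},
where m̄ = n+1−m.  Here F = ℚ(v), q = v^{2n}; indices in {1,…,n} are realized as
`Fin n` (0-based), and conjugation m̄ = n+1−m corresponds to `Fin.rev`.
-/

set_option synthInstance.maxHeartbeats 1000000
set_option maxHeartbeats 1000000

noncomputable section

/-!
Write `R̂ = E + D`, where `E` exchanges the two states of a pair, with a weight depending only on
whether they are equal, and `D` is diagonal and supported on increasing pairs. The map
`(a, b) ↦ (b̄, ā)` is injective and commutes with the exchange. It keeps increasing pairs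
increasing, because it reverses the order of the states twice: once by the rotation, once by the
conjugation. Hence it preserves `D` and `E`, and rotation also transposes them, which is harmless
since `D` is diagonal and the weight of `E` is symmetric in the two states.
-/

section RotateConj

open Matrix

variable {ι R : Type*} {σ : ι → ι}

/-- The action on pairs of states of the rotation by 180 degrees combined with the conjugation `σ`
of states. -/
def rotatePair (σ : ι → ι) (p : ι × ι) : ι × ι := (σ p.2, σ p.1)

theorem rotatePair_injective (hσ : Function.Injective σ) : Function.Injective (rotatePair σ) :=
  fun _ _ h => Prod.ext (hσ (congrArg Prod.snd h)) (hσ (congrArg Prod.fst h))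

/-- The matrix of a diagram with two inputs and two outputs after rotation by 180 degrees and
conjugation of all states by `σ`. The rotation interchanges inputs and outputs, which is encoded by
the transpose. -/
def rotateConj (σ : ι → ι) (M : Matrix (ι × ι) (ι × ι) R) : Matrix (ι × ι) (ι × ι) R :=
  (M.submatrix (rotatePair σ) (rotatePair σ))ᵀ

theorem rotateConj_add [Add R] (M N : Matrix (ι × ι) (ι × ι) R) :
    rotateConj σ (M + N) = rotateConj σ M + rotateConj σ N :=
  rfl

/-- The matrix exchanging the two states of a pair, with weight `f p` in row `p`. -/
def exchangeMatrix [DecidableEq ι] [Zero R] (f : ι × ι → R) : Matrix (ι × ι) (ι × ι) R :=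
  (diagonal f).submatrix id Prod.swap

theorem transpose_exchangeMatrix [DecidableEq ι] [Zero R] (f : ι × ι → R) :
    (exchangeMatrix f)ᵀ = exchangeMatrix (f ∘ Prod.swap) :=
  calc (exchangeMatrix f)ᵀ
      = (diagonal f).submatrix Prod.swap id := by
        rw [exchangeMatrix, transpose_submatrix, diagonal_transpose]
    _ = ((diagonal f).submatrix Prod.swap Prod.swap).submatrix id Prod.swap := by
        rw [submatrix_submatrix, Prod.swap_swap_eq, Function.comp_id]
    _ = exchangeMatrix (f ∘ Prod.swap) := by
        rw [submatrix_diagonal _ _ Prod.swap_injective, exchangeMatrix]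

theorem rotateConj_diagonal [DecidableEq ι] [Zero R] (hσ : Function.Injective σ)
    (f : ι × ι → R) : rotateConj σ (diagonal f) = diagonal (f ∘ rotatePair σ) := by
  rw [rotateConj, submatrix_diagonal _ _ (rotatePair_injective hσ), diagonal_transpose]

theorem rotateConj_exchangeMatrix [DecidableEq ι] [Zero R] (hσ : Function.Injective σ)
    (f : ι × ι → R) :
    rotateConj σ (exchangeMatrix f) = exchangeMatrix (f ∘ rotatePair σ ∘ Prod.swap) := by
  have rotated : (exchangeMatrix f).submatrix (rotatePair σ) (rotatePair σ) =
      exchangeMatrix (f ∘ rotatePair σ) :=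
    congrArg (·.submatrix id Prod.swap) (submatrix_diagonal f _ (rotatePair_injective hσ))
  rw [rotateConj, rotated, transpose_exchangeMatrix, Function.comp_assoc]

end RotateConj

section BraidMatrix

open Matrix

variable {ι R : Type*} [LinearOrder ι] [Zero R] [Add R] {σ : ι → ι}

/-- The braiding matrix over a linearly ordered set of states with arbitrary weights: `x` for the
exchange of equal states, `y` for the exchange of distinct states, and `z` for the passage of an
increasing pair of states. The matrix `R̂` is the case `x = q^{-1/n} q`, `y = q^{-1/n}`,
`z = q^{-1/n} (q - q⁻¹)`. -/
def braidMatrix (x y z : R) : Matrix (ι × ι) (ι × ι) R :=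
  exchangeMatrix (fun p => if p.1 = p.2 then x else y) +
    diagonal (fun p => if p.1 < p.2 then z else 0)

theorem rotateConj_braidMatrix (hσ : StrictAnti σ) (x y z : R) :
    rotateConj σ (braidMatrix x y z) = braidMatrix x y z := by
  rw [braidMatrix, rotateConj_add, rotateConj_exchangeMatrix hσ.injective,
    rotateConj_diagonal hσ.injective]
  simp only [Function.comp_def, rotatePair, Prod.fst_swap, Prod.snd_swap, hσ.injective.eq_iff,
    hσ.lt_iff_gt]

theorem Rhat_rotation_conjugation_general (hσ : StrictAnti σ) (x y z : R) (a b c d : ι) :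
    braidMatrix x y z (a, b) (c, d) = braidMatrix x y z (σ d, σ c) (σ b, σ a) :=
  (congrFun₂ (rotateConj_braidMatrix hσ x y z) (a, b) (c, d)).symm

end BraidMatrix

theorem Rhat_eq_braidMatrix (n : ℕ) :
    Rhat n = braidMatrix (vv ^ (-2 : ℤ) * vv ^ (2 * (n : ℤ))) (vv ^ (-2 : ℤ))
      (vv ^ (-2 : ℤ) * (vv ^ (2 * (n : ℤ)) - vv ^ (-(2 * (n : ℤ))))) := by
  ext ⟨a, b⟩ ⟨c, d⟩
  simp only [Rhat, braidMatrix, exchangeMatrix, Matrix.add_apply, Matrix.submatrix_apply,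
    Matrix.diagonal_apply, id_eq, Prod.swap_prod_mk, Prod.mk.injEq, ite_and, mul_add]
  congr 1 <;> split_ifs <;> simp

theorem Rhat_rotation_conjugation (n : ℕ) (hn : 2 ≤ n) (a b c d : Fin n) :
    Rhat n (a, b) (c, d) = Rhat n (d.rev, c.rev) (b.rev, a.rev) := by
  rw [Rhat_eq_braidMatrix]
  exact Rhat_rotation_conjugation_general Fin.rev_strictAnti _ _ _ a b c d
end
end
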